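/- arXiv:2209.04626 — 3 statements merged into one kernel-verified Lean document; each statement's English description precedes it below -/
import Mathlib

section
/- Let X, ΔX ∈ ℂ^{n×n}, let Q̂, V̂_{XQ} ∈ ℂ^{n×n} be unitary matrices, let Ũ, Σ̃ ∈ ℂ^{n×n}, and let ε_qr, ε̄_J ≥ 0. Assume that ‖ΔX(i,:)‖₂ ≤ ε_qr ‖X(i,:)‖₂ for every row index i, and that there is a matrix F_{XQ} ∈ ℂ^{n×n} with ‖F_{XQ}(i,:)‖₂ ≤ ε̄_J ‖((X+ΔX)Q̂)(i,:)‖₂ for every i such that (X+ΔX)Q̂ + F_{XQ} = Ũ Σ̃ V̂_{XQ}*. Then there exist a unitary matrix V̂_X ∈ ℂ^{n×n} and a matrix F ∈ ℂ^{n×n} such that X + F = Ũ Σ̃ V̂_X* and ‖F(i,:)‖₂ ≤ (ε̄_J(1+ε_qr) + ε_qr) ‖X(i,:)‖₂ for every row index i. (One may take V̂_X = Q̂ V̂_{XQ} and F = ΔX + F_{XQ} Q̂*.) -/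
lemma row_norm_sq {n : ℕ} (A : Matrix (Fin n) (Fin n) ℂ) (i : Fin n) :
    ((‖(WithLp.equiv 2 (Fin n → ℂ)).symm (A i)‖ ^ 2 : ℝ) : ℂ) = (A * A.conjTranspose) i i := by
  rw [EuclideanSpace.norm_sq_eq, Matrix.mul_apply]
  push_cast
  refine Finset.sum_congr rfl fun j _ => ?_
  rw [Matrix.conjTranspose_apply]
  exact (Complex.mul_conj' (A i j)).symm

lemma row_norm_mul {n : ℕ} (A Q : Matrix (Fin n) (Fin n) ℂ) (hQ : Q * Q.conjTranspose = 1)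
    (i : Fin n) :
    ‖(WithLp.equiv 2 (Fin n → ℂ)).symm ((A * Q) i)‖ =
      ‖(WithLp.equiv 2 (Fin n → ℂ)).symm (A i)‖ := by
  have h : (A * Q) * (A * Q).conjTranspose = A * A.conjTranspose := by
    rw [Matrix.conjTranspose_mul, Matrix.mul_assoc, ← Matrix.mul_assoc Q, hQ, Matrix.one_mul]
  have h2 := row_norm_sq (A * Q) i
  rw [h, ← row_norm_sq A i] at h2
  exact (sq_eq_sq₀ (norm_nonneg _) (norm_nonneg _)).1 (Complex.ofReal_injective h2)

lemma row_norm_add {n : ℕ} (A B : Matrix (Fin n) (Fin n) ℂ) (i : Fin n) :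
    ‖(WithLp.equiv 2 (Fin n → ℂ)).symm ((A + B) i)‖ ≤
      ‖(WithLp.equiv 2 (Fin n → ℂ)).symm (A i)‖ + ‖(WithLp.equiv 2 (Fin n → ℂ)).symm (B i)‖ :=
  norm_add_le ((WithLp.equiv 2 (Fin n → ℂ)).symm (A i)) ((WithLp.equiv 2 (Fin n → ℂ)).symm (B i))

/-- Deterministic core of Proposition 1: rowwise backward stability after
applying a unitary factor `Q̂` with rowwise backward error `ΔX`, followed by
a rowwise backward stable SVD of `(X + ΔX) Q̂`. -/
theorem mixed_precision_rowwise_backward_stability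
    (n : ℕ) (X ΔX Qhat VhatXQ Utilde Stilde FXQ : Matrix (Fin n) (Fin n) ℂ)
    (εqr εJ : ℝ) (hεqr : 0 ≤ εqr) (hεJ : 0 ≤ εJ)
    (hQ : Qhat ∈ Matrix.unitaryGroup (Fin n) ℂ)
    (hV : VhatXQ ∈ Matrix.unitaryGroup (Fin n) ℂ)
    (hΔX : ∀ i, ‖(WithLp.equiv 2 (Fin n → ℂ)).symm (ΔX i)‖ ≤
      εqr * ‖(WithLp.equiv 2 (Fin n → ℂ)).symm (X i)‖)
    (hFXQ : ∀ i, ‖(WithLp.equiv 2 (Fin n → ℂ)).symm (FXQ i)‖ ≤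
      εJ * ‖(WithLp.equiv 2 (Fin n → ℂ)).symm (((X + ΔX) * Qhat) i)‖)
    (hSVD : (X + ΔX) * Qhat + FXQ = Utilde * Stilde * VhatXQ.conjTranspose) :
    ∃ VhatX F : Matrix (Fin n) (Fin n) ℂ,
      VhatX ∈ Matrix.unitaryGroup (Fin n) ℂ ∧
      X + F = Utilde * Stilde * VhatX.conjTranspose ∧
      ∀ i, ‖(WithLp.equiv 2 (Fin n → ℂ)).symm (F i)‖ ≤
        (εJ * (1 + εqr) + εqr) * ‖(WithLp.equiv 2 (Fin n → ℂ)).symm (X i)‖ := by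
  have hQ1 : Qhat * Qhat.conjTranspose = 1 := Matrix.mem_unitaryGroup_iff.1 hQ
  have hQ2 : Qhat.conjTranspose * Qhat = 1 := Matrix.mem_unitaryGroup_iff'.1 hQ
  refine ⟨Qhat * VhatXQ, ΔX + FXQ * Qhat.conjTranspose, mul_mem hQ hV, ?_, fun i => ?_⟩
  · rw [Matrix.conjTranspose_mul, ← Matrix.mul_assoc, ← hSVD, Matrix.add_mul,
      Matrix.mul_assoc (X + ΔX), hQ1, Matrix.mul_one, add_assoc]
  · have h1 := row_norm_add ΔX (FXQ * Qhat.conjTranspose) i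
    rw [row_norm_mul FXQ Qhat.conjTranspose
      (by rw [Matrix.conjTranspose_conjTranspose, hQ2]) i] at h1
    have h2 := hFXQ i
    rw [row_norm_mul _ Qhat hQ1] at h2
    have h3 := row_norm_add X ΔX i
    have h4 := hΔX i
    have h5 := mul_le_mul_of_nonneg_left (h3.trans (add_le_add_right h4 _)) hεJ
    linarith
end

section
/- Let X ∈ ℂ^{n×n} be invertible and suppose X = UΣV* where U, V ∈ ℂ^{n×n} are unitary and Σ ∈ ℝ^{n×n} is diagonal with strictly positive diagonal entries. Then X*U = VΣ. Consequently, if X*U = QR is any factorization with Q ∈ ℂ^{n×n} unitary and R ∈ ℂ^{n×n} upper triangular with strictly positive real diagonal entries, then Q = V and R = Σ. -/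
/-- Exact-arithmetic justification of the precision-switching step:
if `X = UΣV*` is an SVD of an invertible matrix with positive singular
values, then `X*U = VΣ`, and any QR factorization `X*U = QR` with `R`
upper triangular with strictly positive real diagonal satisfies
`Q = V` and `R = Σ`. -/
theorem switching_precisions_qr_recovers_V
    (n : ℕ) (X U V : Matrix (Fin n) (Fin n) ℂ)
    (S : Matrix (Fin n) (Fin n) ℝ)
    (hX : IsUnit X)
    (hU : U ∈ Matrix.unitaryGroup (Fin n) ℂ)
    (hV : V ∈ Matrix.unitaryGroup (Fin n) ℂ)
    (hSdiag : S.IsDiag) (hSpos : ∀ i, 0 < S i i)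
    (hSVD : X = U * S.map (Complex.ofReal) * V.conjTranspose) :
    X.conjTranspose * U = V * S.map (Complex.ofReal) ∧
      ∀ Q R : Matrix (Fin n) (Fin n) ℂ,
        Q ∈ Matrix.unitaryGroup (Fin n) ℂ →
        R.BlockTriangular (id : Fin n → Fin n) →
        (∀ i, 0 < (R i i).re ∧ (R i i).im = 0) →
        X.conjTranspose * U = Q * R →
        Q = V ∧ R = S.map (Complex.ofReal) := by
  obtain ⟨d, rfl⟩ : ∃ d, S = Matrix.diagonal d := ⟨_, hSdiag.diagonal_diag.symm⟩
  have hS : (Matrix.diagonal d).map Complex.ofReal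
      = Matrix.diagonal (fun i => (d i : ℂ)) := by
    rw [Matrix.diagonal_map Complex.ofReal_zero]
  have hd : ∀ i, 0 < d i := by simpa using hSpos
  rw [hS] at hSVD ⊢
  have hDs : (Matrix.diagonal (fun i => (d i : ℂ))).conjTranspose
      = Matrix.diagonal (fun i => (d i : ℂ)) := by
    rw [Matrix.diagonal_conjTranspose]
    congr 1
    ext i
    simp
  have hU' : U.conjTranspose * U = 1 := Matrix.mem_unitaryGroup_iff'.1 hU
  have hV' : V.conjTranspose * V = 1 := Matrix.mem_unitaryGroup_iff'.1 hV
  have h1 : X.conjTranspose * U = V * Matrix.diagonal (fun i => (d i : ℂ)) := by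
    rw [hSVD, Matrix.conjTranspose_mul, Matrix.conjTranspose_mul,
      Matrix.conjTranspose_conjTranspose, hDs, Matrix.mul_assoc, Matrix.mul_assoc, hU',
      Matrix.mul_one]
  refine ⟨h1, ?_⟩
  intro Q R hQ hR hRd hQR
  have hQ' : Q.conjTranspose * Q = 1 := Matrix.mem_unitaryGroup_iff'.1 hQ
  rw [h1] at hQR
  have hne : ∀ i, R i i ≠ 0 := fun i h => by
    have := (hRd i).1
    simp [h] at this
  have hdet : IsUnit R.det := by
    rw [Matrix.det_of_upperTriangular hR, isUnit_iff_ne_zero]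
    exact Finset.prod_ne_zero_iff.2 fun i _ => hne i
  have hRR : R.conjTranspose * R = Matrix.diagonal (fun i => (d i : ℂ) * d i) := by
    have e1 : (Q * R).conjTranspose * (Q * R) = R.conjTranspose * R := by
      rw [Matrix.conjTranspose_mul, Matrix.mul_assoc, ← Matrix.mul_assoc _ Q, hQ',
        Matrix.one_mul]
    rw [← e1, ← hQR, Matrix.conjTranspose_mul, Matrix.mul_assoc, ← Matrix.mul_assoc _ V, hV',
        Matrix.one_mul, hDs, Matrix.diagonal_mul_diagonal]
  have hRs : R.conjTranspose = Matrix.diagonal (fun i => (d i : ℂ) * d i) * R⁻¹ := by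
    rw [← hRR, Matrix.mul_assoc, Matrix.mul_nonsing_inv _ hdet, Matrix.mul_one]
  haveI : Invertible R := Matrix.invertibleOfIsUnitDet R hdet
  have hinv : R⁻¹.BlockTriangular (id : Fin n → Fin n) :=
    Matrix.blockTriangular_inv_of_blockTriangular hR
  have hlow : ∀ i j, i < j → R i j = 0 := by
    intro i j hij
    have h := congrFun (congrFun hRs j) i
    rw [Matrix.diagonal_mul, hinv (show id i < id j from hij), mul_zero,
      Matrix.conjTranspose_apply] at h
    exact star_eq_zero.1 h
  have hoff : ∀ i j, i ≠ j → R i j = 0 := by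
    intro i j hij
    rcases lt_or_gt_of_ne hij with h | h
    · exact hlow i j h
    · exact hR h
  have hRS : R = Matrix.diagonal (fun i => (d i : ℂ)) := by
    ext i j
    by_cases hij : i = j
    · subst hij
      have h := congrFun (congrFun hRR i) i
      rw [Matrix.mul_apply, Finset.sum_eq_single i
        (fun k _ hk => by rw [hoff k i hk, mul_zero]) (by simp)] at h
      rw [Matrix.diagonal_apply_eq, Matrix.conjTranspose_apply] at h
      rw [Matrix.diagonal_apply_eq]
      have h2 := congrArg Complex.re h
      simp [(hRd i).2] at h2
      apply Complex.ext
      · rw [Complex.ofReal_re]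
        have := (hRd i).1
        have := hd i
        nlinarith
      · rw [Complex.ofReal_im]
        exact (hRd i).2
    · rw [hoff i j hij, Matrix.diagonal_apply_ne _ hij]
  refine ⟨?_, hRS⟩
  rw [← hRS] at hQR
  have := congrArg (· * R⁻¹) hQR
  simp only [Matrix.mul_assoc, Matrix.mul_nonsing_inv _ hdet, Matrix.mul_one] at this
  exact this.symm
end

section
/- Let A ∈ ℂ^{n×n} be Hermitian (A* = A) and suppose A = UΣV* where U, V ∈ ℂ^{n×n} are unitary and Σ ∈ ℝ^{n×n} is diagonal with nonnegative diagonal entries. Then the matrix Ã = U*AU satisfies: for all indices j, k, if Σ_{jj} ≠ Σ_{kk} then Ã_{jk} = 0. In other words, after grouping equal diagonal entries of Σ together, U*AU is block diagonal with one diagonal block for each distinct singular value of A, the size of the block being the multiplicity of that singular value. -/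
/-- Block-diagonal structure of `U*AU` for a Hermitian matrix `A` with SVD
`A = UΣV*`: entries of `U*AU` coupling different singular values vanish. -/
theorem hermitian_svd_block_diagonal
    (n : ℕ) (A U V : Matrix (Fin n) (Fin n) ℂ)
    (S : Matrix (Fin n) (Fin n) ℝ)
    (hA : A.IsHermitian)
    (hU : U ∈ Matrix.unitaryGroup (Fin n) ℂ)
    (hV : V ∈ Matrix.unitaryGroup (Fin n) ℂ)
    (hSdiag : S.IsDiag) (hSnonneg : ∀ i, 0 ≤ S i i)
    (hSVD : A = U * S.map (Complex.ofReal) * V.conjTranspose) :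
    ∀ j k, S j j ≠ S k k → (U.conjTranspose * A * U) j k = 0 := by
  intro j k hjk
  obtain ⟨d, rfl⟩ : ∃ d : Fin n → ℝ, S = Matrix.diagonal d :=
    ⟨_, hSdiag.diagonal_diag.symm⟩
  have hD : (Matrix.diagonal d).map Complex.ofReal
      = Matrix.diagonal (fun i => (d i : ℂ)) := by
    rw [Matrix.diagonal_map Complex.ofReal_zero]
  rw [hD] at hSVD
  simp only [Matrix.diagonal_apply_eq] at hjk hSnonneg
  have hU1 : U.conjTranspose * U = 1 := (Matrix.mem_unitaryGroup_iff').1 hU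
  have hU2 : U * U.conjTranspose = 1 := (Matrix.mem_unitaryGroup_iff).1 hU
  have hV1 : V.conjTranspose * V = 1 := (Matrix.mem_unitaryGroup_iff').1 hV
  generalize hE : Matrix.diagonal (fun i => (d i : ℂ)) = D at hSVD
  have hDH : D.conjTranspose = D := by
    rw [← hE, Matrix.diagonal_conjTranspose]
    congr 1
    funext i
    simp
  have hAA : A * A = U * (D * D) * U.conjTranspose := by
    calc A * A = A * A.conjTranspose := by rw [hA.eq]
      _ = U * D * (V.conjTranspose * V) * D.conjTranspose * U.conjTranspose := by
        rw [hSVD]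
        simp only [Matrix.conjTranspose_mul, Matrix.conjTranspose_conjTranspose, Matrix.mul_assoc]
      _ = _ := by rw [hV1, hDH]; simp only [Matrix.mul_assoc, Matrix.mul_one, Matrix.one_mul]
  generalize hB : U.conjTranspose * A * U = B
  have hBB : B * B = D * D := by
    calc B * B = U.conjTranspose * (A * (U * U.conjTranspose) * A) * U := by
          rw [← hB]; simp only [Matrix.mul_assoc]
      _ = (U.conjTranspose * U) * (D * D) * (U.conjTranspose * U) := by
          rw [hU2, Matrix.mul_one, hAA]; simp only [Matrix.mul_assoc]
      _ = D * D := by rw [hU1, Matrix.mul_one, Matrix.one_mul]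
  have hcomm : B * (D * D) = (D * D) * B := by rw [← hBB, Matrix.mul_assoc]
  have h := congrFun (congrFun hcomm j) k
  rw [← hE, Matrix.diagonal_mul_diagonal, Matrix.mul_diagonal, Matrix.diagonal_mul] at h
  have h2 : B j k * ((d k * d k - d j * d j : ℝ) : ℂ) = 0 := by
    push_cast
    linear_combination h
  rcases mul_eq_zero.1 h2 with h3 | h3
  · exact h3
  · exfalso
    apply hjk
    have h4 : d k * d k - d j * d j = 0 := by exact_mod_cast h3
    exact (mul_self_inj (hSnonneg j) (hSnonneg k)).1 (by linarith)
end
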